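/- Let k ≥ 1 and μ ⊆ {1, …, 2k}, suppose the entrywise reduction M = ρₖ(e_μ) mod 2ℤ[i] is not the identity matrix over ℤ[i]/2ℤ[i], and let A : (ℤ[i]/2ℤ[i])^{2^k} → (ℤ[i]/2ℤ[i])^{2^k} be the map v ↦ M·v. Then {v : A(v) = v} = {v : ∃ w ∈ (ℤ[i]/2ℤ[i])^{2^k}, A(w) = v + w}; that is, the set of fixed points of the Clifford action of e_μ on the 2-torsion points equals its set of translation constants. -/

import Mathlib

/-!
Modulo 2 every `ρₖ(e_μ)` is a scalar times a translation of the index group `(ℤ/2)^k`: its row `r`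
has the single nonzero entry `c`, in column `r xor a`, where `c ∈ {1, i}` and `a < 2^k` do not
depend on `r`. This holds for the `2 × 2` factors (signs disappear modulo 2) and is inherited by
Kronecker products (`XorMonomial.kron`) and matrix products (`XorMonomial.mul`).

The action is therefore `(A v)_r = c * v_{r xor a}` with `c ^ 2 = 1`, so `A ^ 2 = 1` and, in
characteristic 2, `(A + 1) ^ 2 = 0`: translation constants are fixed points. Conversely let `v` be
fixed. If `a ≠ 0`, the translation by `a` has no fixed index, and restricting `v` to one index out
of each pair `{r, r xor a}` gives a `w` with `A w = v + w`. If `a = 0`, then `c = i` because the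
matrix is not the identity, and the claim is that the annihilator of `1 + i` in `ℤ[i]/2` is the
ideal generated by `1 + i` (`exists_of_gi_mul_eq`).
-/

open Matrix

namespace DiracSpinor

/-- The Gaussian integer `i`. -/
def gi : GaussianInt := ⟨0, 1⟩

/-- `E₁ = [[i,0],[0,−i]]`. -/
def E1 : Matrix (Fin 2) (Fin 2) GaussianInt := !![gi, 0; 0, -gi]

/-- `E₂ = [[0,i],[i,0]]`. -/
def E2 : Matrix (Fin 2) (Fin 2) GaussianInt := !![0, gi; gi, 0]

/-- `B = [[0,−i],[i,0]]`. -/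
def Bm : Matrix (Fin 2) (Fin 2) GaussianInt := !![0, -gi; gi, 0]

/-- The 2×2 identity matrix. -/
def I2 : Matrix (Fin 2) (Fin 2) GaussianInt := 1

/-- Kronecker product of square matrices, with the standard identification of the
index set `Fin m × Fin n` with `Fin (m*n)`. -/
def kron {m n : ℕ} (A : Matrix (Fin m) (Fin m) GaussianInt)
    (B : Matrix (Fin n) (Fin n) GaussianInt) :
    Matrix (Fin (m * n)) (Fin (m * n)) GaussianInt :=
  Matrix.reindex finProdFinEquiv finProdFinEquiv (Matrix.kroneckerMap (· * ·) A B)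

/-- Iterated Kronecker power `A^{⊗t}`. -/
def kronPow (A : Matrix (Fin 2) (Fin 2) GaussianInt) :
    (t : ℕ) → Matrix (Fin (2 ^ t)) (Fin (2 ^ t)) GaussianInt
  | 0 => 1
  | t + 1 => Matrix.reindex (finCongr (pow_succ 2 t).symm) (finCongr (pow_succ 2 t).symm)
      (kron (kronPow A t) A)

theorem sizeEq (k : ℕ) (i : Fin (2 * k)) :
    2 ^ (k - 1 - i.val / 2) * 2 * 2 ^ (i.val / 2) = 2 ^ k := by
  have h1 : i.val < 2 * k := i.isLt
  have h2 : (k - 1 - i.val / 2) + 1 + i.val / 2 = k := by omega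
  calc 2 ^ (k - 1 - i.val / 2) * 2 * 2 ^ (i.val / 2)
      = 2 ^ ((k - 1 - i.val / 2) + 1 + i.val / 2) := by rw [pow_add, pow_add, pow_one]
    _ = 2 ^ k := by rw [h2]

/-- `rhoVec k i` is `ρₖ(e_{i+1})`, the matrix representing the `(i+1)`-st vector generator
(`i : Fin (2*k)` is 0-based, so `i = 2j-2` encodes `e_{2j-1}` and `i = 2j-1` encodes `e_{2j}`):
`ρₖ(e_{2j−1}) = I₂^{⊗(k−j)} ⊗ E₁ ⊗ B^{⊗(j−1)}` and `ρₖ(e_{2j}) = I₂^{⊗(k−j)} ⊗ E₂ ⊗ B^{⊗(j−1)}`. -/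
def rhoVec (k : ℕ) (i : Fin (2 * k)) : Matrix (Fin (2 ^ k)) (Fin (2 ^ k)) GaussianInt :=
  Matrix.reindex (finCongr (sizeEq k i)) (finCongr (sizeEq k i))
    (kron (kron (kronPow I2 (k - 1 - i.val / 2)) (if i.val % 2 = 0 then E1 else E2))
      (kronPow Bm (i.val / 2)))

/-- `rho k μ` is `ρₖ(e_μ)`: the product of the `ρₖ(e_i)` for `i ∈ μ` taken in increasing order
(`μ : Finset (Fin (2*k))` is the 0-based version of a subset of `{1, …, 2k}`). -/
def rho (k : ℕ) (μ : Finset (Fin (2 * k))) : Matrix (Fin (2 ^ k)) (Fin (2 ^ k)) GaussianInt :=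
  ((μ.sort (· ≤ ·)).map (rhoVec k)).prod

/-- The quotient ring `ℤ[i]/2ℤ[i]`. -/
abbrev Rbar : Type := GaussianInt ⧸ Ideal.span ({2} : Set GaussianInt)

/-- Reduction `ℤ[i] → ℤ[i]/2ℤ[i]`. -/
def red : GaussianInt →+* Rbar := Ideal.Quotient.mk _

/-- `rhoBar k μ` is the entrywise reduction of `ρₖ(e_μ)` mod `2ℤ[i]`. -/
def rhoBar (k : ℕ) (μ : Finset (Fin (2 * k))) : Matrix (Fin (2 ^ k)) (Fin (2 ^ k)) Rbar :=
  (rho k μ).map red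

/-- The shape of a matrix: the 0–1 matrix recording the positions of nonzero entries. -/
def Sh {n : ℕ} (M : Matrix (Fin n) (Fin n) GaussianInt) : Matrix (Fin n) (Fin n) GaussianInt :=
  Matrix.of fun r s => if M r s = 0 then 0 else 1

/-- A matrix has real type if all its nonzero entries lie in `{1, −1}`. -/
def RealType {n : ℕ} (M : Matrix (Fin n) (Fin n) GaussianInt) : Prop :=
  ∀ r s, M r s ≠ 0 → M r s = 1 ∨ M r s = -1

/-- A matrix has imaginary type if all its nonzero entries lie in `{i, −i}`. -/
def ImagType {n : ℕ} (M : Matrix (Fin n) (Fin n) GaussianInt) : Prop :=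
  ∀ r s, M r s ≠ 0 → M r s = gi ∨ M r s = -gi

theorem red_two_mul (z : GaussianInt) : red (2 * z) = 0 :=
  Ideal.Quotient.eq_zero_iff_mem.mpr (Ideal.mul_mem_right _ _ (Ideal.mem_span_singleton_self 2))

theorem Rbar.add_self (x : Rbar) : x + x = 0 := by
  obtain ⟨z, rfl⟩ := Ideal.Quotient.mk_surjective x
  have h := red_two_mul z
  rw [two_mul, map_add] at h
  exact h

theorem Rbar.neg_eq (x : Rbar) : -x = x := neg_eq_of_add_eq_zero_left (Rbar.add_self x)

theorem red_gi_mul_self : red gi * red gi = 1 := by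
  have h : gi * gi = -1 := by decide
  rw [← map_mul, h, map_neg, map_one, Rbar.neg_eq]

/-- In `ℤ[i]/2`, an element annihilated by `1 + i` is a multiple of `1 + i`. -/
theorem exists_of_gi_mul_eq (x : Rbar) (h : red gi * x = x) :
    ∃ w, red gi * w = x + w := by
  obtain ⟨z, rfl⟩ := Ideal.Quotient.mk_surjective x
  change red gi * red z = red z at h
  rw [← map_mul, ← sub_eq_zero, ← map_sub] at h
  obtain ⟨q, hq⟩ := Ideal.mem_span_singleton.mp (Ideal.Quotient.eq_zero_iff_mem.mp h)
  have hre := congrArg Zsqrtd.im hq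
  simp [gi] at hre
  -- `re z ≡ im z` modulo 2, hence `z ≡ (1 + i) * re z`
  refine ⟨red ⟨z.re, 0⟩, ?_⟩
  change _ = red z + _
  rw [← map_mul, ← map_add, ← sub_eq_zero, ← map_sub]
  convert red_two_mul ⟨-z.re, q.im⟩ using 2
  ext
  · simp [gi]; ring
  · simp [gi]; linarith

/-- Modulo 2, the matrix `M` is `c ∈ {1, i}` times the permutation matrix of the index map
`r ↦ r xor a`, for some `a < n`. -/
def XorMonomial {n : ℕ} (M : Matrix (Fin n) (Fin n) GaussianInt) : Prop :=
  ∃ c : Rbar, (c = 1 ∨ c = red gi) ∧ ∃ a < n, ∀ r s : Fin n,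
    red (M r s) = if s.val = r.val ^^^ a then c else 0

theorem unit_mul {c d : Rbar} (hc : c = 1 ∨ c = red gi) (hd : d = 1 ∨ d = red gi) :
    c * d = 1 ∨ c * d = red gi := by
  rcases hc with rfl | rfl <;> rcases hd with rfl | rfl <;> simp [red_gi_mul_self]

theorem unit_mul_self {c : Rbar} (hc : c = 1 ∨ c = red gi) : c * c = 1 := by
  rcases hc with rfl | rfl
  · simp
  · exact red_gi_mul_self

theorem XorMonomial.one {n : ℕ} (hn : 0 < n) :
    XorMonomial (1 : Matrix (Fin n) (Fin n) GaussianInt) := by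
  refine ⟨1, Or.inl rfl, 0, hn, fun r s => ?_⟩
  rw [Matrix.one_apply, Nat.xor_zero]
  by_cases h : r = s
  · simp [h]
  · rw [if_neg h, if_neg (fun h' => h (Fin.ext h'.symm)), map_zero]

theorem XorMonomial.mul {k : ℕ} {M N : Matrix (Fin (2 ^ k)) (Fin (2 ^ k)) GaussianInt}
    (hM : XorMonomial M) (hN : XorMonomial N) : XorMonomial (M * N) := by
  obtain ⟨c, hc, a, ha, hM⟩ := hM
  obtain ⟨d, hd, b, hb, hN⟩ := hN
  refine ⟨c * d, unit_mul hc hd, a ^^^ b, Nat.xor_lt_two_pow ha hb, fun r s => ?_⟩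
  rw [Matrix.mul_apply, map_sum,
    Finset.sum_eq_single (⟨r.val ^^^ a, Nat.xor_lt_two_pow r.isLt ha⟩ : Fin (2 ^ k))]
  · rw [map_mul, hM, hN, if_pos rfl, Nat.xor_assoc, mul_ite, mul_zero]
  · intro t _ ht
    rw [map_mul, hM, if_neg (fun h => ht (Fin.ext h)), zero_mul]
  · intro h
    exact absurd (Finset.mem_univ _) h

/-- Concatenation of binary expansions: a `xor` splits into high and low digits. -/
theorem eq_xor_iff (t r s a b : ℕ) (hb : b < 2 ^ t) :
    s = r ^^^ (a * 2 ^ t + b) ↔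
      s / 2 ^ t = r / 2 ^ t ^^^ a ∧ s % 2 ^ t = r % 2 ^ t ^^^ b := by
  have hd : (r ^^^ (a * 2 ^ t + b)) / 2 ^ t = r / 2 ^ t ^^^ a := by
    rw [Nat.xor_div_two_pow, mul_comm a, Nat.mul_add_div (by positivity),
      Nat.div_eq_of_lt hb, add_zero]
  have hm : (r ^^^ (a * 2 ^ t + b)) % 2 ^ t = r % 2 ^ t ^^^ b := by
    rw [Nat.xor_mod_two_pow, mul_comm a, Nat.mul_add_mod, Nat.mod_eq_of_lt hb]
  constructor
  · rintro rfl
    exact ⟨hd, hm⟩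
  · rintro ⟨h1, h2⟩
    rw [← Nat.div_add_mod s (2 ^ t), h1, h2, ← hd, ← hm, Nat.div_add_mod]

theorem XorMonomial.kron {m t : ℕ} {M : Matrix (Fin m) (Fin m) GaussianInt}
    {N : Matrix (Fin (2 ^ t)) (Fin (2 ^ t)) GaussianInt}
    (hM : XorMonomial M) (hN : XorMonomial N) : XorMonomial (kron M N) := by
  obtain ⟨c, hc, a, ha, hM⟩ := hM
  obtain ⟨d, hd, b, hb, hN⟩ := hN
  refine ⟨c * d, unit_mul hc hd, a * 2 ^ t + b, by nlinarith, fun r s => ?_⟩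
  change red (M r.divNat s.divNat * N r.modNat s.modNat) = _
  rw [map_mul, hM, hN]
  simp only [eq_xor_iff t _ _ a b hb, Fin.coe_divNat, Fin.coe_modNat]
  exact ite_zero_mul_ite_zero _ _ _ _

theorem XorMonomial.reindex {m n : ℕ} (h : m = n) {M : Matrix (Fin m) (Fin m) GaussianInt}
    (hM : XorMonomial M) : XorMonomial (Matrix.reindex (finCongr h) (finCongr h) M) := by
  subst h
  exact hM

theorem XorMonomial.kronPow {A : Matrix (Fin 2) (Fin 2) GaussianInt} (hA : XorMonomial A) :
    ∀ t, XorMonomial (kronPow A t)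
  | 0 => XorMonomial.one (by norm_num)
  | t + 1 => ((XorMonomial.kronPow hA t).kron (t := 1) hA).reindex _

theorem xorMonomial_E1 : XorMonomial E1 :=
  ⟨red gi, Or.inr rfl, 0, by norm_num, fun r s => by
    fin_cases r <;> fin_cases s <;> simp [E1, Rbar.neg_eq]⟩

theorem xorMonomial_E2 : XorMonomial E2 :=
  ⟨red gi, Or.inr rfl, 1, by norm_num, fun r s => by
    fin_cases r <;> fin_cases s <;> simp [E2]⟩

theorem xorMonomial_Bm : XorMonomial Bm :=
  ⟨red gi, Or.inr rfl, 1, by norm_num, fun r s => by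
    fin_cases r <;> fin_cases s <;> simp [Bm, Rbar.neg_eq]⟩

theorem xorMonomial_rhoVec (k : ℕ) (i : Fin (2 * k)) : XorMonomial (rhoVec k i) := by
  refine XorMonomial.reindex _ (XorMonomial.kron ?_ (xorMonomial_Bm.kronPow _))
  refine XorMonomial.kron (t := 1) (XorMonomial.kronPow (XorMonomial.one two_pos) _) ?_
  split_ifs
  exacts [xorMonomial_E1, xorMonomial_E2]

theorem xorMonomial_rho (k : ℕ) (μ : Finset (Fin (2 * k))) : XorMonomial (rho k μ) := by
  unfold rho
  induction μ.sort (· ≤ ·) with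
  | nil => exact XorMonomial.one (by positivity)
  | cons i l ih =>
    rw [List.map_cons, List.prod_cons]
    exact (xorMonomial_rhoVec k i).mul ih

/-- The set of fixed points of the Clifford action of a non-identity generator `e_μ` on the
2-torsion points equals its set of translation constants. -/
theorem fixed_points_eq_translation_constants (k : ℕ) (hk : 1 ≤ k)
    (μ : Finset (Fin (2 * k))) (h : rhoBar k μ ≠ 1) :
    {v : Fin (2 ^ k) → Rbar | (rhoBar k μ).mulVec v = v} =
      {v : Fin (2 ^ k) → Rbar | ∃ w : Fin (2 ^ k) → Rbar, (rhoBar k μ).mulVec w = v + w} := by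
  obtain ⟨c, hc, a, ha, hM⟩ := xorMonomial_rho k μ
  let σ : Fin (2 ^ k) → Fin (2 ^ k) := fun r => ⟨r.val ^^^ a, Nat.xor_lt_two_pow r.isLt ha⟩
  have hσσ : ∀ r, σ (σ r) = r := fun r => Fin.ext (by simp [σ])
  have hentry : ∀ r s, rhoBar k μ r s = if s = σ r then c else 0 := fun r s => by
    simp only [rhoBar, Matrix.map_apply, hM, Fin.ext_iff, σ]
  have hmul : ∀ v r, (rhoBar k μ).mulVec v r = c * v (σ r) := fun v r => by
    simp [Matrix.mulVec, dotProduct, hentry]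
  ext v
  simp only [Set.mem_ofPred_eq, funext_iff, hmul, Pi.add_apply]
  constructor
  · intro hv
    rcases Nat.eq_zero_or_pos a with rfl | ha0
    · have hσ : ∀ r, σ r = r := fun r => Fin.ext (by simp [σ])
      have hci : c = red gi := hc.resolve_left fun h1 => h (by
        ext r s
        rw [hentry, hσ, h1, Matrix.one_apply]
        simp only [eq_comm])
      subst hci
      simp only [hσ] at hv ⊢
      choose w hw using fun r => exists_of_gi_mul_eq (v r) (hv r)
      exact ⟨w, hw⟩
    · have hne : ∀ r, σ r ≠ r := fun r hr => by
        have h1 : r.val ^^^ a = r.val ^^^ 0 := by simpa [σ] using congrArg Fin.val hr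
        have h2 := Nat.xor_right_injective h1
        omega
      -- `w` is `v` restricted to the smaller index of each pair `{r, σ r}`
      refine ⟨fun r => if r < σ r then v r else 0, fun r => ?_⟩
      simp only [hσσ]
      rcases lt_or_gt_of_ne (hne r) with hlt | hlt
      · rw [if_pos hlt, if_neg (not_lt.mpr hlt.le), hv, add_zero]
      · rw [if_neg (not_lt.mpr hlt.le), if_pos hlt, Rbar.add_self, mul_zero]
  · rintro ⟨w, hw⟩ r
    have h1 := hw r
    have h2 := hw (σ r)
    rw [hσσ] at h2
    have hcc := unit_mul_self hc
    have h3 := Rbar.add_self (v r)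
    linear_combination -c * h2 + w r * hcc - h1 - h3

end DiracSpinor
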